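/- arXiv:2512.11085 — 2 statements merged into one kernel-verified Lean document; each statement's English description precedes it below -/
import Mathlib

section
/- Let κ ∈ Δ_+ (positive coordinates, Σκ_i² = 1), let 𝒵(κ) ∈ ℝ^d be the vector 𝒵_ℓ(κ) = C ∫_{S^{d-1}} z_ℓ² (Σ_i z_i²/κ_i²)^{-(d+1)/2} dη(z) with C^{-1} = ∫_{S^{d-1}} (Σ_i z_i²/κ_i²)^{-(d+1)/2} dη(z), and let π_i = κ_i^{-2} (C^{-1})^{2/(d+1)}. Then π is the unique minimizer over u ∈ ℝ_{>0}^d of the strictly convex function u ↦ ⟨𝒵(κ), u⟩ - Ξ(u), where Ξ(u) = -(2/(d-1)) ∫_{S^{d-1}} (Σ_i u_i z_i²)^{-(d-1)/2} dη(z). -/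
open MeasureTheory

/-- The uniform (normalized Hausdorff) probability measure on the unit sphere
`S^{d-1} ⊆ ℝ^d`. -/
noncomputable def sphereUniform (d : ℕ) : Measure (EuclideanSpace ℝ (Fin d)) :=
  ((μH[(d : ℝ) - 1] (Metric.sphere (0 : EuclideanSpace ℝ (Fin d)) 1))⁻¹ : ENNReal) •
    (μH[(d : ℝ) - 1]).restrict (Metric.sphere (0 : EuclideanSpace ℝ (Fin d)) 1)

/-- The function `Ξ(u) = -(2/(d-1)) ∫_{S^{d-1}} (Σ_i u_i z_i²)^{-(d-1)/2} dη(z)`. -/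
noncomputable def Xi (d : ℕ) (u : EuclideanSpace ℝ (Fin d)) : ℝ :=
  -(2 / ((d : ℝ) - 1)) *
    ∫ z, (∑ i, u i * z i ^ 2) ^ (-((d : ℝ) - 1) / 2) ∂(sphereUniform d)

open Metric
open scoped NNReal ENNReal

/-- Radial projection is `2`-Lipschitz outside the open unit ball. -/
theorem lipschitzOnWith_normalize {E : Type*} [NormedAddCommGroup E] [NormedSpace ℝ E] :
    LipschitzOnWith 2 (fun x : E => ‖x‖⁻¹ • x) {x | 1 ≤ ‖x‖} := by
  refine LipschitzOnWith.of_dist_le_mul fun x hx y hy => ?_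
  simp only [Set.mem_ofPred_eq] at hx hy
  have hx0 : 0 < ‖x‖ := by linarith
  have hy0 : 0 < ‖y‖ := by linarith
  have key : ‖x‖⁻¹ • x - ‖y‖⁻¹ • y = ‖x‖⁻¹ • ((x - y) + ((‖y‖ - ‖x‖) * ‖y‖⁻¹) • y) := by
    have h : ‖x‖⁻¹ * ((‖y‖ - ‖x‖) * ‖y‖⁻¹) = ‖x‖⁻¹ - ‖y‖⁻¹ := by field_simp
    rw [smul_add, smul_smul, h, sub_smul, smul_sub]
    abel
  rw [dist_eq_norm, dist_eq_norm, key, norm_smul, norm_inv, norm_norm]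
  have h1 : ‖((‖y‖ - ‖x‖) * ‖y‖⁻¹) • y‖ ≤ ‖x - y‖ := by
    rw [norm_smul, norm_mul, norm_inv, norm_norm, mul_assoc, inv_mul_cancel₀ hy0.ne', mul_one,
      Real.norm_eq_abs, ← norm_neg (x - y), neg_sub]
    exact abs_norm_sub_norm_le y x
  have h2 : ‖(x - y) + ((‖y‖ - ‖x‖) * ‖y‖⁻¹) • y‖ ≤ 2 * ‖x - y‖ :=
    (norm_add_le _ _).trans (by linarith)
  calc _ ≤ 1 * (2 * ‖x - y‖) :=
        mul_le_mul (inv_le_one_of_one_le₀ hx) h2 (norm_nonneg _) zero_le_one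
    _ = _ := by simp

/-- Insert the value `s` at coordinate `l`, as a map into Euclidean space. -/
noncomputable def euclideanInsert {n : ℕ} (l : Fin (n + 1)) (s : ℝ) (x : Fin n → ℝ) :
    EuclideanSpace ℝ (Fin (n + 1)) :=
  WithLp.toLp 2 (l.insertNth s x)

theorem lipschitzWith_euclideanInsert {n : ℕ} (l : Fin (n + 1)) (s : ℝ) :
    ∃ K : ℝ≥0, LipschitzWith K (euclideanInsert l s) := by
  have h : LipschitzWith 1 (fun x : Fin n → ℝ => (l.insertNth s x : Fin (n + 1) → ℝ)) := by
    refine LipschitzWith.of_dist_le_mul fun x y => ?_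
    rw [NNReal.coe_one, one_mul, dist_pi_le_iff dist_nonneg]
    intro j
    refine Fin.succAboveCases l ?_ (fun i => ?_) j
    · simp
    · simpa using dist_le_pi_dist x y i
  exact ⟨_, (PiLp.lipschitzWith_toLp 2 (fun _ : Fin (n + 1) => ℝ)).comp h⟩

theorem hausdorffMeasure_sphere_lt_top (n : ℕ) :
    μH[(n : ℝ)] (sphere (0 : EuclideanSpace ℝ (Fin (n + 1))) 1) < ∞ := by
  let Q : Set (Fin n → ℝ) := closedBall 0 1
  let f : Fin (n + 1) × Bool → (Fin n → ℝ) → EuclideanSpace ℝ (Fin (n + 1)) := fun p x =>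
    ‖euclideanInsert p.1 (if p.2 then 1 else -1) x‖⁻¹ •
      euclideanInsert p.1 (if p.2 then 1 else -1) x
  have hfin : ∀ p, μH[(n : ℝ)] (f p '' Q) < ∞ := by
    intro p
    obtain ⟨K, hK⟩ := lipschitzWith_euclideanInsert p.1 (if p.2 then 1 else -1)
    have hL : LipschitzOnWith (2 * K) (f p) Q := by
      refine lipschitzOnWith_normalize.comp hK.lipschitzOnWith fun x _ => ?_
      refine le_trans ?_ (PiLp.norm_apply_le _ p.1)
      simp only [euclideanInsert, Fin.insertNth_apply_same]
      split_ifs <;> simp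
    refine (hL.hausdorffMeasure_image_le n.cast_nonneg).trans_lt ?_
    have hv : μH[(n : ℝ)] Q = volume Q := by
      have := hausdorffMeasure_pi_real (ι := Fin n)
      rw [Fintype.card_fin] at this
      rw [this]
    rw [hv]
    exact ENNReal.mul_lt_top (ENNReal.rpow_lt_top_of_nonneg n.cast_nonneg ENNReal.coe_ne_top)
      (isCompact_closedBall _ _).measure_lt_top
  have hsub : sphere (0 : EuclideanSpace ℝ (Fin (n + 1))) 1 ⊆ ⋃ p, f p '' Q := by
    intro z hz
    rw [mem_sphere_zero_iff_norm] at hz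
    obtain ⟨l, hl⟩ := Finite.exists_max fun i => |z i|
    have hl0 : 0 < |z l| := by
      refine lt_of_le_of_ne (abs_nonneg _) fun h => ?_
      have : z = 0 := by
        ext i
        have := hl i
        rw [← h] at this
        simpa using this
      simp [this] at hz
    have hins : ∀ s : ℝ, s * |z l| = z l →
        euclideanInsert l s (fun i => z (l.succAbove i) / |z l|) = |z l|⁻¹ • z := by
      intro s hs
      ext j
      refine Fin.succAboveCases l ?_ (fun i => ?_) j
      · simp only [euclideanInsert, Fin.insertNth_apply_same, PiLp.smul_apply, smul_eq_mul]
        field_simp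
        linarith
      · simp only [euclideanInsert, Fin.insertNth_apply_succAbove, PiLp.smul_apply, smul_eq_mul]
        field_simp
    refine Set.mem_iUnion.2 ⟨(l, decide (0 ≤ z l)), fun i => z (l.succAbove i) / |z l|, ?_, ?_⟩
    · rw [mem_closedBall_zero_iff, pi_norm_le_iff_of_nonneg zero_le_one]
      intro i
      rw [norm_div, Real.norm_eq_abs, Real.norm_eq_abs, abs_abs]
      exact div_le_one_of_le₀ (hl _) (abs_nonneg _)
    · have hs : (if (decide (0 ≤ z l)) then (1 : ℝ) else -1) * |z l| = z l := by
        by_cases h : 0 ≤ z l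
        · simp [h]
        · simp [h, abs_of_neg (not_le.1 h)]
      simp only [f]
      rw [hins _ hs, norm_smul, hz, smul_smul]
      simp [hl0.ne']
  exact (measure_mono hsub).trans_lt <| (measure_iUnion_le _).trans_lt <| by
    rw [tsum_fintype]
    exact ENNReal.sum_lt_top.2 fun p _ => hfin p

/-- A diagonal quadratic form with a nonzero coefficient is nonzero on a subset of the sphere of
positive Hausdorff measure. -/
theorem hausdorffMeasure_sphere_inter_quadratic_pos {n : ℕ} (w : Fin (n + 1) → ℝ) (hw : w ≠ 0) :
    0 < μH[(n : ℝ)] ({z : EuclideanSpace ℝ (Fin (n + 1)) | ∑ i, w i * z i ^ 2 ≠ 0} ∩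
      sphere 0 1) := by
  obtain ⟨l, hl⟩ := Function.ne_iff.1 hw
  let p : EuclideanSpace ℝ (Fin (n + 1)) → (Fin n → ℝ) := fun z i => z (l.succAbove i)
  have hp : LipschitzWith 1 p := by
    refine LipschitzWith.of_dist_le_mul fun x y => ?_
    rw [NNReal.coe_one, one_mul, dist_pi_le_iff dist_nonneg]
    intro j
    rw [dist_eq_norm, dist_eq_norm]
    exact PiLp.norm_apply_le (x - y) (l.succAbove j)
  let U : Set (Fin n → ℝ) := {x | ∑ i, x i ^ 2 < 1} ∩
    {x | w l * (1 - ∑ i, x i ^ 2) + ∑ i, w (l.succAbove i) * x i ^ 2 ≠ 0}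
  have hUo : IsOpen U := by
    refine (isOpen_lt (by fun_prop) continuous_const).inter (isOpen_ne_fun ?_ continuous_const)
    fun_prop
  have hU : 0 < volume U := hUo.measure_pos volume ⟨0, by simpa [U] using hl⟩
  have hv : μH[(n : ℝ)] U = volume U := by
    have := hausdorffMeasure_pi_real (ι := Fin n)
    rw [Fintype.card_fin] at this
    rw [this]
  rw [← hv] at hU
  have hsub : U ⊆ p '' ({z | ∑ i, w i * z i ^ 2 ≠ 0} ∩ sphere 0 1) := by
    rintro x ⟨hx1, hx2⟩
    have hsq : √(1 - ∑ i, x i ^ 2) ^ 2 = 1 - ∑ i, x i ^ 2 :=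
      Real.sq_sqrt (by simp only [Set.mem_ofPred_eq] at hx1; linarith)
    refine ⟨euclideanInsert l √(1 - ∑ i, x i ^ 2) x, ⟨?_, ?_⟩, ?_⟩
    · simpa [Fin.sum_univ_succAbove _ l, euclideanInsert, hsq] using hx2
    · rw [mem_sphere_zero_iff_norm, EuclideanSpace.norm_eq, Fin.sum_univ_succAbove _ l]
      simp [euclideanInsert, hsq]
    · ext i
      simp [p, euclideanInsert]
  have := (measure_mono hsub).trans (hp.hausdorffMeasure_image_le n.cast_nonneg _)
  refine hU.trans_le ?_
  simpa using this

theorem sphereUniform_apply_quadratic_pos {d : ℕ} (w : Fin d → ℝ) (hw : w ≠ 0) :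
    0 < sphereUniform d {z | ∑ i, w i * z i ^ 2 ≠ 0} := by
  obtain _ | n := d
  · exact absurd (Subsingleton.elim w 0) hw
  have hn : ((n + 1 : ℕ) : ℝ) - 1 = n := by push_cast; ring
  have hm : MeasurableSet {z : EuclideanSpace ℝ (Fin (n + 1)) | ∑ i, w i * z i ^ 2 ≠ 0} :=
    (isOpen_ne_fun (by fun_prop) continuous_const).measurableSet
  rw [sphereUniform, hn, Measure.smul_apply, Measure.restrict_apply hm, smul_eq_mul]
  exact ENNReal.mul_pos (ENNReal.inv_ne_zero.2 (hausdorffMeasure_sphere_lt_top n).ne)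
    (hausdorffMeasure_sphere_inter_quadratic_pos w hw).ne'

theorem isProbabilityMeasure_sphereUniform {d : ℕ} (hd : d ≠ 0) :
    IsProbabilityMeasure (sphereUniform d) := by
  obtain ⟨n, rfl⟩ := Nat.exists_eq_succ_of_ne_zero hd
  have hn : ((n.succ : ℕ) : ℝ) - 1 = n := by push_cast; ring
  have hpos := (hausdorffMeasure_sphere_inter_quadratic_pos (n := n) 1 one_ne_zero).trans_le
    (measure_mono Set.inter_subset_right)
  refine ⟨?_⟩
  rw [sphereUniform, hn, Measure.smul_apply, Measure.restrict_apply_univ, smul_eq_mul]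
  exact ENNReal.inv_mul_cancel hpos.ne' (hausdorffMeasure_sphere_lt_top n).ne

theorem sphereUniform_restrict_sphere (d : ℕ) :
    (sphereUniform d).restrict (sphere 0 1) = sphereUniform d := by
  rw [sphereUniform, Measure.restrict_smul, Measure.restrict_restrict isClosed_sphere.measurableSet,
    Set.inter_self]

theorem ae_mem_sphere_sphereUniform (d : ℕ) : ∀ᵐ z ∂(sphereUniform d), z ∈ sphere 0 1 := by
  rw [← sphereUniform_restrict_sphere]
  exact ae_restrict_mem isClosed_sphere.measurableSet

theorem ContinuousOn.integrable_sphereUniform {d : ℕ} (hd : d ≠ 0)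
    {f : EuclideanSpace ℝ (Fin d) → ℝ} (hf : ContinuousOn f (sphere 0 1)) :
    Integrable f (sphereUniform d) := by
  have := isProbabilityMeasure_sphereUniform hd
  rw [← sphereUniform_restrict_sphere]
  exact hf.integrableOn_compact (isCompact_sphere 0 1)

theorem sum_mul_sq_pos {d : ℕ} {u : Fin d → ℝ} (hu : ∀ i, 0 < u i)
    {z : EuclideanSpace ℝ (Fin d)} (hz : z ∈ sphere 0 1) : 0 < ∑ i, u i * z i ^ 2 := by
  have h0 : ∀ i ∈ Finset.univ, 0 ≤ u i * z i ^ 2 := fun i _ =>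
    mul_nonneg (hu i).le (sq_nonneg _)
  refine lt_of_le_of_ne (Finset.sum_nonneg h0) fun h => ?_
  have hz0 : z = 0 := by
    ext i
    have := (Finset.sum_eq_zero_iff_of_nonneg h0).1 h.symm i (Finset.mem_univ i)
    simpa [(hu i).ne'] using this
  simp [hz0] at hz

theorem continuousOn_sum_mul_sq_rpow {d : ℕ} {u : Fin d → ℝ} (hu : ∀ i, 0 < u i) (p : ℝ) :
    ContinuousOn (fun z : EuclideanSpace ℝ (Fin d) => (∑ i, u i * z i ^ 2) ^ p) (sphere 0 1) :=
  ContinuousOn.rpow_const (by fun_prop) fun _ hz => Or.inl (sum_mul_sq_pos hu hz).ne'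

/-- Strict tangent line inequality for `t ↦ t ^ (-p)`. -/
theorem rpow_neg_tangent_lt {p s t : ℝ} (hp : 0 < p) (hs : 0 < s) (ht : 0 < t) (hst : s ≠ t) :
    t ^ (-p) - p * t ^ (-p - 1) * (s - t) < s ^ (-p) := by
  have hr : 0 < s / t := div_pos hs ht
  have hr1 : s / t ≠ 1 := fun h => hst ((div_eq_one_iff_eq ht.ne').1 h)
  have h1 : 1 - p * (s / t - 1) < (s / t) ^ (-p) := by
    rw [Real.rpow_def_of_pos hr]
    have hlog := mul_lt_mul_of_pos_left (Real.log_lt_sub_one_of_pos hr hr1) hp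
    have hexp := Real.add_one_le_exp (Real.log (s / t) * -p)
    linarith
  have h2 : t ^ (-p - 1) = t ^ (-p) / t := Real.rpow_sub_one ht.ne' _
  have h3 : s ^ (-p) = t ^ (-p) * (s / t) ^ (-p) := by
    rw [← Real.mul_rpow ht.le hr.le, mul_div_cancel₀ _ ht.ne']
  rw [h2, h3]
  calc _ = t ^ (-p) * (1 - p * (s / t - 1)) := by field_simp
    _ < _ := mul_lt_mul_of_pos_left h1 (Real.rpow_pos_of_pos ht _)

/-- Strict tangent hyperplane inequality for the concave function `Ξ`. -/
theorem Xi_lt_tangent {d : ℕ} (hd : 2 ≤ d) {u v : EuclideanSpace ℝ (Fin d)}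
    (hu : ∀ i, 0 < u i) (hv : ∀ i, 0 < v i) (huv : u ≠ v) :
    Xi d u < Xi d v + ∑ l, (u l - v l) *
      ∫ z, z l ^ 2 * (∑ i, v i * z i ^ 2) ^ (-((d : ℝ) + 1) / 2) ∂(sphereUniform d) := by
  have hd0 : d ≠ 0 := by omega
  have hd2 : (2 : ℝ) ≤ d := by exact_mod_cast hd
  set p : ℝ := ((d : ℝ) - 1) / 2 with hp
  have hp0 : 0 < p := by rw [hp]; linarith
  have e1 : -((d : ℝ) - 1) / 2 = -p := by rw [hp]; ring
  have e2 : -((d : ℝ) + 1) / 2 = -p - 1 := by rw [hp]; ring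
  have e3 : 2 / ((d : ℝ) - 1) = p⁻¹ := by rw [hp, inv_div]
  rw [Xi, Xi, e1, e2, e3]
  have hui := (continuousOn_sum_mul_sq_rpow hu (-p)).integrable_sphereUniform hd0
  have hvi := (continuousOn_sum_mul_sq_rpow hv (-p)).integrable_sphereUniform hd0
  have hzi : ∀ l, Integrable (fun z : EuclideanSpace ℝ (Fin d) =>
      z l ^ 2 * (∑ i, v i * z i ^ 2) ^ (-p - 1)) (sphereUniform d) := fun l =>
    (ContinuousOn.mul (by fun_prop)
      (continuousOn_sum_mul_sq_rpow hv (-p - 1))).integrable_sphereUniform hd0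
  have hsi : Integrable (fun z : EuclideanSpace ℝ (Fin d) =>
      ∑ l, (u l - v l) * (z l ^ 2 * (∑ i, v i * z i ^ 2) ^ (-p - 1))) (sphereUniform d) :=
    integrable_finsetSum _ fun l _ => (hzi l).const_mul _
  let g : EuclideanSpace ℝ (Fin d) → ℝ := fun z =>
    (∑ i, u i * z i ^ 2) ^ (-p) - (∑ i, v i * z i ^ 2) ^ (-p) +
      p * ∑ l, (u l - v l) * (z l ^ 2 * (∑ i, v i * z i ^ 2) ^ (-p - 1))
  have hg : ∀ z ∈ sphere (0 : EuclideanSpace ℝ (Fin d)) 1,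
      (∑ i, u i * z i ^ 2 ≠ ∑ i, v i * z i ^ 2 → 0 < g z) ∧
        (∑ i, u i * z i ^ 2 = ∑ i, v i * z i ^ 2 → g z = 0) := by
    intro z hz
    have hsum : ∑ l, (u l - v l) * (z l ^ 2 * (∑ i, v i * z i ^ 2) ^ (-p - 1)) =
        (∑ i, v i * z i ^ 2) ^ (-p - 1) * (∑ i, u i * z i ^ 2 - ∑ i, v i * z i ^ 2) := by
      rw [← Finset.sum_sub_distrib, Finset.mul_sum]
      exact Finset.sum_congr rfl fun l _ => by ring
    simp only [g, hsum]
    refine ⟨fun h => ?_, fun h => ?_⟩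
    · have := rpow_neg_tangent_lt hp0 (sum_mul_sq_pos hu hz) (sum_mul_sq_pos hv hz) h
      linarith
    · rw [h]; ring
  have hgi : Integrable g (sphereUniform d) := (hui.sub hvi).add (hsi.const_mul p)
  have hgnn : 0 ≤ᵐ[sphereUniform d] g := by
    filter_upwards [ae_mem_sphere_sphereUniform d] with z hz
    by_cases h : ∑ i, u i * z i ^ 2 = ∑ i, v i * z i ^ 2
    · exact ((hg z hz).2 h).ge
    · exact ((hg z hz).1 h).le
  have hw : (fun i => u i - v i) ≠ 0 := fun h => huv <| by
    ext i
    exact sub_eq_zero.1 (congrFun h i)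
  have hgpos : 0 < ∫ z, g z ∂(sphereUniform d) := by
    rw [integral_pos_iff_support_of_nonneg_ae hgnn hgi]
    refine (sphereUniform_apply_quadratic_pos _ hw).trans_le (measure_mono_ae ?_)
    filter_upwards [ae_mem_sphere_sphereUniform d] with z hz h
    refine ((hg z hz).1 fun h' => h ?_).ne'
    simp only [sub_mul, Finset.sum_sub_distrib, h', sub_self]
  have hgint : ∫ z, g z ∂(sphereUniform d) =
      ∫ z, (∑ i, u i * z i ^ 2) ^ (-p) ∂(sphereUniform d) -
        ∫ z, (∑ i, v i * z i ^ 2) ^ (-p) ∂(sphereUniform d) +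
      p * ∑ l, (u l - v l) *
        ∫ z, z l ^ 2 * (∑ i, v i * z i ^ 2) ^ (-p - 1) ∂(sphereUniform d) := by
    simp only [g]
    rw [integral_add (by exact hui.sub hvi) (hsi.const_mul p), integral_sub hui hvi, integral_const_mul,
      integral_finsetSum _ fun l _ => (hzi l).const_mul _]
    simp only [integral_const_mul]
  rw [hgint] at hgpos
  have := mul_pos (inv_pos.2 hp0) hgpos
  rw [mul_add, inv_mul_cancel_left₀ hp0.ne'] at this
  linarith

/-- A function lying strictly above an affine minorant touching at each point is strictly convex. -/
theorem strictConvexOn_of_lt_tangent {d : ℕ} {s : Set (EuclideanSpace ℝ (Fin d))}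
    (hs : Convex ℝ s) {F : EuclideanSpace ℝ (Fin d) → ℝ}
    (G : EuclideanSpace ℝ (Fin d) → Fin d → ℝ)
    (h : ∀ u ∈ s, ∀ v ∈ s, u ≠ v → F v + ∑ l, (u l - v l) * G v l < F u) :
    StrictConvexOn ℝ s F := by
  refine ⟨hs, fun x hx y hy hxy a b ha hb hab => ?_⟩
  have hw : a • x + b • y ∈ s := hs hx hy ha.le hb.le hab
  have hxw : x ≠ a • x + b • y := fun hh => hxy <| by
    have h1 : b • x = b • y := by
      have h2 : x = a • x + b • x := by rw [← add_smul, hab, one_smul]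
      exact add_left_cancel (h2.symm.trans hh)
    exact smul_right_injective _ hb.ne' h1
  have hyw : y ≠ a • x + b • y := fun hh => hxy <| by
    have h1 : a • y = a • x := by
      have h2 : y = a • y + b • y := by rw [← add_smul, hab, one_smul]
      exact add_right_cancel (h2.symm.trans hh)
    exact (smul_right_injective _ ha.ne' h1).symm
  have h1 := mul_lt_mul_of_pos_left (h x hx _ hw hxw) ha
  have h2 := mul_lt_mul_of_pos_left (h y hy _ hw hyw) hb
  set w := a • x + b • y with hwdef
  have h3 : a * ∑ l, (x l - w l) * G w l + b * ∑ l, (y l - w l) * G w l = 0 := by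
    rw [Finset.mul_sum, Finset.mul_sum, ← Finset.sum_add_distrib]
    refine Finset.sum_eq_zero fun l _ => ?_
    have : w l = a * x l + b * y l := by simp [hwdef]
    have hb' : b = 1 - a := by linarith
    rw [this, hb']
    ring
  have h4 : a * F w + b * F w = F w := by rw [← add_mul, hab, one_mul]
  simp only [smul_eq_mul]
  linarith

/-- with `𝒵_ℓ(κ) = C ∫ z_ℓ² (Σ z_i²/κ_i²)^{-(d+1)/2} dη`,
`C^{-1} = ∫ (Σ z_i²/κ_i²)^{-(d+1)/2} dη` and `π_i = κ_i^{-2} (C^{-1})^{2/(d+1)}`,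
the point `π` is the unique minimizer over `ℝ_{>0}^d` of the strictly convex function
`u ↦ ⟨𝒵(κ), u⟩ - Ξ(u)`. -/
theorem pi_unique_minimizer (d : ℕ) (hd : 2 ≤ d)
    (κ : Fin d → ℝ) (hκpos : ∀ i, 0 < κ i) (hκnorm : ∑ i, κ i ^ 2 = 1)
    (C : ℝ)
    (hC : C = (∫ z, (∑ i, z i ^ 2 / κ i ^ 2) ^ (-((d : ℝ) + 1) / 2)
      ∂(sphereUniform d))⁻¹)
    (Z : Fin d → ℝ)
    (hZ : ∀ ℓ, Z ℓ = C * ∫ z, z ℓ ^ 2 * (∑ i, z i ^ 2 / κ i ^ 2) ^ (-((d : ℝ) + 1) / 2)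
      ∂(sphereUniform d))
    (piv : EuclideanSpace ℝ (Fin d))
    (hpiv : ∀ i, piv i = (C⁻¹ ^ ((2 : ℝ) / ((d : ℝ) + 1))) / κ i ^ 2)
    (F : EuclideanSpace ℝ (Fin d) → ℝ)
    (hF : ∀ u, F u = (∑ ℓ, Z ℓ * u ℓ) - Xi d u) :
    StrictConvexOn ℝ {u : EuclideanSpace ℝ (Fin d) | ∀ i, 0 < u i} F ∧
    (∀ i, 0 < piv i) ∧
    (∀ u : EuclideanSpace ℝ (Fin d), (∀ i, 0 < u i) → u ≠ piv → F piv < F u) := by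
  have hd0 : d ≠ 0 := by omega
  let k : Fin d → ℝ := fun i => (κ i ^ 2)⁻¹
  have hk : ∀ i, 0 < k i := fun i => inv_pos.2 (pow_pos (hκpos i) 2)
  have hsum : ∀ z : EuclideanSpace ℝ (Fin d), ∑ i, z i ^ 2 / κ i ^ 2 = ∑ i, k i * z i ^ 2 :=
    fun z => Finset.sum_congr rfl fun i _ => div_eq_inv_mul _ _
  simp only [hsum] at hC hZ
  have hprob := isProbabilityMeasure_sphereUniform hd0
  have hIpos : 0 < ∫ z, (∑ i, k i * z i ^ 2) ^ (-((d : ℝ) + 1) / 2) ∂(sphereUniform d) := by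
    have hpos : ∀ᵐ z ∂(sphereUniform d), 0 < (∑ i, k i * z i ^ 2) ^ (-((d : ℝ) + 1) / 2) := by
      filter_upwards [ae_mem_sphere_sphereUniform d] with z hz
      exact Real.rpow_pos_of_pos (sum_mul_sq_pos hk hz) _
    rw [integral_pos_iff_support_of_nonneg_ae (hpos.mono fun z hz => hz.le)
      ((continuousOn_sum_mul_sq_rpow hk _).integrable_sphereUniform hd0)]
    have hle : sphereUniform d Set.univ ≤ sphereUniform d (Function.support
        fun z => (∑ i, k i * z i ^ 2) ^ (-((d : ℝ) + 1) / 2)) :=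
      measure_mono_ae (hpos.mono fun z hz _ => hz.ne')
    rw [measure_univ] at hle
    exact zero_lt_one.trans_le hle
  have hCpos : 0 < C := hC ▸ inv_pos.2 hIpos
  set K : ℝ := C⁻¹ ^ ((2 : ℝ) / ((d : ℝ) + 1)) with hK
  have hKpos : 0 < K := Real.rpow_pos_of_pos (inv_pos.2 hCpos) _
  have hKC : K ^ (-((d : ℝ) + 1) / 2) = C := by
    rw [hK, ← Real.rpow_mul (inv_pos.2 hCpos).le,
      show (2 : ℝ) / ((d : ℝ) + 1) * (-((d : ℝ) + 1) / 2) = -1 by field_simp,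
      Real.rpow_neg_one, inv_inv]
  have hpos : ∀ i, 0 < piv i := fun i => by
    rw [hpiv]
    exact div_pos hKpos (pow_pos (hκpos i) 2)
  have hZpiv : ∀ l, Z l =
      ∫ z, z l ^ 2 * (∑ i, piv i * z i ^ 2) ^ (-((d : ℝ) + 1) / 2) ∂(sphereUniform d) := by
    intro l
    rw [hZ, ← integral_const_mul]
    refine integral_congr_ae ?_
    filter_upwards [ae_mem_sphere_sphereUniform d] with z hz
    have h1 : ∑ i, piv i * z i ^ 2 = K * ∑ i, k i * z i ^ 2 := by
      rw [Finset.mul_sum]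
      refine Finset.sum_congr rfl fun i _ => ?_
      rw [hpiv, div_eq_mul_inv, mul_assoc]
    rw [h1, Real.mul_rpow hKpos.le (sum_mul_sq_pos hk hz).le, hKC]
    ring
  have htangent : ∀ u v : EuclideanSpace ℝ (Fin d), (∀ i, 0 < u i) → (∀ i, 0 < v i) → u ≠ v →
      F v + ∑ l, (u l - v l) * (Z l - ∫ z, z l ^ 2 *
        (∑ i, v i * z i ^ 2) ^ (-((d : ℝ) + 1) / 2) ∂(sphereUniform d)) < F u := by
    intro u v hu hv huv
    have hXi := Xi_lt_tangent hd hu hv huv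
    have hlin : ∑ l, (u l - v l) * Z l = ∑ l, Z l * u l - ∑ l, Z l * v l := by
      rw [← Finset.sum_sub_distrib]
      exact Finset.sum_congr rfl fun l _ => by ring
    rw [hF, hF]
    simp only [mul_sub, Finset.sum_sub_distrib]
    rw [hlin]
    linarith
  refine ⟨strictConvexOn_of_lt_tangent ?_ _ fun u hu v hv huv => htangent u v hu hv huv, hpos,
    fun u hu hne => ?_⟩
  · intro x hx y hy a b ha hb hab i
    have hx' := hx i
    have hy' := hy i
    simp only [PiLp.add_apply, PiLp.smul_apply, smul_eq_mul]
    rcases ha.eq_or_lt with rfl | ha'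
    · have : b = 1 := by linarith
      simpa [this] using hy'
    · exact add_pos_of_pos_of_nonneg (mul_pos ha' hx') (mul_nonneg hb hy'.le)
  · have := htangent u piv hu hpos hne
    simpa only [← hZpiv, sub_self, mul_zero, Finset.sum_const_zero, add_zero] using this
end

section
/- Let Λ be symmetric positive definite on ℝ^d and η the uniform probability measure on S^{d-1}. For p > 0 define M_p = ∫_{S^{d-1}} ζζᵀ (ζᵀΛ^{-1}ζ)^{-p} dη(ζ). Then M_p commutes with Λ; in fact, if Λ = PᵀDP with P orthogonal and D diagonal, then P M_p Pᵀ is diagonal. Consequently the covariance matrices of the full gradient weighting (p = (d+2)/2) and of the normalized gradient weighting (p = (d+1)/2) have exactly the same eigenvectors, the rows of P. -/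
open MeasureTheory Matrix

/-- `M_p = ∫_{S^{d-1}} ζζᵀ (ζᵀΛ^{-1}ζ)^{-p} dη(ζ)`. -/
noncomputable def Mmat (d : ℕ) (Λ : Matrix (Fin d) (Fin d) ℝ) (p : ℝ) :
    Matrix (Fin d) (Fin d) ℝ :=
  Matrix.of fun i j =>
    ∫ ζ, ζ i * ζ j * ((fun k => ζ k) ⬝ᵥ (Λ⁻¹ *ᵥ fun k => ζ k)) ^ (-p)
      ∂(sphereUniform d)

/-- A linear isometry of `ℝ^d` preserves the uniform measure on the unit sphere. -/
theorem measurePreserving_sphereUniform {d : ℕ}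
    (e : EuclideanSpace ℝ (Fin d) ≃ₗᵢ[ℝ] EuclideanSpace ℝ (Fin d)) :
    MeasurePreserving e (sphereUniform d) (sphereUniform d) := by
  have h := (e.toIsometryEquiv.measurePreserving_hausdorffMeasure
    ((d : ℝ) - 1)).restrict_preimage
    (Metric.isClosed_sphere (x := (0 : EuclideanSpace ℝ (Fin d))) (ε := 1)).measurableSet
  have hpre : e.toIsometryEquiv ⁻¹' Metric.sphere (0 : EuclideanSpace ℝ (Fin d)) 1 =
      Metric.sphere 0 1 := by
    ext x
    simp
  rw [hpre] at h
  exact h.smul_measure _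

/-- No information on the Hausdorff measure of the sphere is needed here: if it is `0` or `∞`,
then `sphereUniform d` is the zero measure. -/
instance isFiniteMeasure_sphereUniform (d : ℕ) : IsFiniteMeasure (sphereUniform d) :=
  inferInstanceAs (IsFiniteMeasure (ProbabilityTheory.cond
    (μH[(d : ℝ) - 1]) (Metric.sphere (0 : EuclideanSpace ℝ (Fin d)) 1)))

theorem integrable_sphereUniform_of_continuousOn {d : ℕ} {f : EuclideanSpace ℝ (Fin d) → ℝ}
    (hf : ContinuousOn f (Metric.sphere 0 1)) : Integrable f (sphereUniform d) := by
  have h : IntegrableOn f (Metric.sphere 0 1) (sphereUniform d) :=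
    hf.integrableOn_compact (isCompact_sphere _ _)
  rwa [IntegrableOn, sphereUniform, Measure.restrict_smul,
    Measure.restrict_restrict Metric.isClosed_sphere.measurableSet, Set.inter_self] at h

theorem integrable_Mmat_integrand {d : ℕ} {Λ : Matrix (Fin d) (Fin d) ℝ} (hΛ : Λ.PosDef)
    (p : ℝ) (i j : Fin d) :
    Integrable (fun ζ : EuclideanSpace ℝ (Fin d) =>
      ζ i * ζ j * ((fun k => ζ k) ⬝ᵥ (Λ⁻¹ *ᵥ fun k => ζ k)) ^ (-p)) (sphereUniform d) := by
  refine integrable_sphereUniform_of_continuousOn (ContinuousOn.mul (by fun_prop) ?_)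
  refine ContinuousOn.rpow_const ?_ fun ζ hζ => Or.inl ?_
  · simp only [dotProduct, mulVec]
    fun_prop
  · have hne : (fun k => ζ k) ≠ 0 := by
      intro h0
      have : ζ = 0 := by
        ext k
        exact congrFun h0 k
      simp [this] at hζ
    simpa using (hΛ.inv.dotProduct_mulVec_pos hne).ne'

/-- Equivariance of `M_p` under orthogonal changes of coordinates. -/
theorem Mmat_conj {d : ℕ} {Λ : Matrix (Fin d) (Fin d) ℝ} (hΛ : Λ.PosDef)
    {Q : Matrix (Fin d) (Fin d) ℝ} (hQ : Q ∈ Matrix.orthogonalGroup (Fin d) ℝ) (p : ℝ) :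
    Mmat d (Q * Λ * Qᵀ) p = Q * Mmat d Λ p * Qᵀ := by
  have hQQ : Qᵀ * Q = 1 := (Matrix.mem_orthogonalGroup_iff' (Fin d) ℝ).1 hQ
  let u : unitary (EuclideanSpace ℝ (Fin d) →L[ℝ] EuclideanSpace ℝ (Fin d)) :=
    ⟨Matrix.toEuclideanCLM (𝕜 := ℝ) Q, Unitary.map_mem _ hQ⟩
  let e := Unitary.linearIsometryEquiv u
  have he : ∀ ζ k, e ζ k = ∑ l, Q k l * ζ l := fun ζ k => rfl
  have hweight : ∀ ζ : EuclideanSpace ℝ (Fin d),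
      (fun k => e ζ k) ⬝ᵥ ((Q * Λ * Qᵀ)⁻¹ *ᵥ fun k => e ζ k) =
        (fun k => ζ k) ⬝ᵥ (Λ⁻¹ *ᵥ fun k => ζ k) := by
    intro ζ
    have hinv : (Q * Λ * Qᵀ)⁻¹ = Q * Λ⁻¹ * Qᵀ := by
      rw [Matrix.mul_inv_rev, Matrix.mul_inv_rev, Matrix.inv_eq_left_inv hQQ,
        Matrix.inv_eq_right_inv hQQ, Matrix.mul_assoc]
    have hvec : (fun k => e ζ k) = Q *ᵥ fun k => ζ k := rfl
    rw [hinv, hvec, Matrix.mulVec_mulVec, Matrix.mul_assoc, hQQ, Matrix.mul_one,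
      ← Matrix.mulVec_mulVec, Matrix.dotProduct_mulVec, Matrix.vecMul_mulVec, hQQ]
    simp
  ext i j
  have hchange := (measurePreserving_sphereUniform e).integral_comp
    e.toHomeomorph.measurableEmbedding
    (fun ζ => ζ i * ζ j * ((fun k => ζ k) ⬝ᵥ ((Q * Λ * Qᵀ)⁻¹ *ᵥ fun k => ζ k)) ^ (-p))
  simp only [hweight] at hchange
  simp only [he] at hchange
  simp only [Mmat, Matrix.mul_apply, Matrix.of_apply, Matrix.transpose_apply]
  rw [← hchange]
  simp only [← integral_const_mul, ← integral_mul_const, Finset.sum_mul]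
  rw [Finset.sum_comm]
  have hintegrable : ∀ k l, Integrable (fun ζ : EuclideanSpace ℝ (Fin d) =>
      Q i k * (ζ k * ζ l * ((fun k => ζ k) ⬝ᵥ (Λ⁻¹ *ᵥ fun k => ζ k)) ^ (-p)) * Q j l)
      (sphereUniform d) :=
    fun k l => ((integrable_Mmat_integrand hΛ p k l).const_mul _).mul_const _
  simp_rw [← integral_finsetSum _ fun l _ => hintegrable _ l]
  rw [← integral_finsetSum _ fun k _ => integrable_finsetSum _ fun l _ => hintegrable k l]
  congr 1 with ζ
  simp only [Finset.mul_sum, Finset.sum_mul]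
  refine Finset.sum_congr rfl fun k _ => Finset.sum_congr rfl fun l _ => ?_
  ring

theorem Mmat_diagonal_apply_ne {d : ℕ} {D : Fin d → ℝ} (hD : (Matrix.diagonal D).PosDef)
    (p : ℝ) {a b : Fin d} (hab : a ≠ b) : Mmat d (Matrix.diagonal D) p a b = 0 := by
  let s : Fin d → ℝ := fun k => if k = b then -1 else 1
  have hs : ∀ k, s k * s k = 1 := fun k => by
    by_cases h : k = b <;> simp [s, h]
  have hQ : Matrix.diagonal s ∈ Matrix.orthogonalGroup (Fin d) ℝ := by
    simp [Matrix.mem_orthogonalGroup_iff, hs]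
  have hfix : Matrix.diagonal s * Matrix.diagonal D * (Matrix.diagonal s)ᵀ =
      Matrix.diagonal D := by
    simp only [Matrix.diagonal_transpose, Matrix.diagonal_mul_diagonal]
    congr 1 with k
    linear_combination D k * hs k
  have h := congrFun (congrFun (Mmat_conj hD hQ p) a) b
  rw [hfix, Matrix.diagonal_transpose, Matrix.mul_diagonal, Matrix.diagonal_mul] at h
  simp only [s, if_neg hab, if_true] at h
  linarith

/-- for `Λ = Pᵀ D P` symmetric positive definite (`P` orthogonal, `D`
diagonal) and every `p > 0`, the matrix `M_p` commutes with `Λ` and `P M_p Pᵀ` is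
diagonal; consequently the matrices `M_{(d+2)/2}` (full gradient weighting) and
`M_{(d+1)/2}` (normalized gradient weighting) have exactly the same eigenvectors, the
rows of `P`. -/
theorem Mmat_commutes_and_diagonal (d : ℕ) (hd : 2 ≤ d)
    (Λ : Matrix (Fin d) (Fin d) ℝ) (hΛ : Λ.PosDef)
    (P : Matrix (Fin d) (Fin d) ℝ) (hP : P ∈ Matrix.orthogonalGroup (Fin d) ℝ)
    (D : Fin d → ℝ) (hD : Λ = Pᵀ * Matrix.diagonal D * P) :
    ∀ p : ℝ, 0 < p →
      Mmat d Λ p * Λ = Λ * Mmat d Λ p ∧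
      ∃ dvec : Fin d → ℝ, P * Mmat d Λ p * Pᵀ = Matrix.diagonal dvec := by
  intro p _
  have hPP : Pᵀ * P = 1 := (Matrix.mem_orthogonalGroup_iff' (Fin d) ℝ).1 hP
  have hPP' : P * Pᵀ = 1 := (Matrix.mem_orthogonalGroup_iff (Fin d) ℝ).1 hP
  have hconj : P * Λ * Pᵀ = Matrix.diagonal D := by
    calc P * Λ * Pᵀ = (P * Pᵀ) * Matrix.diagonal D * (P * Pᵀ) := by
          rw [hD]; simp only [Matrix.mul_assoc]
      _ = Matrix.diagonal D := by simp [hPP']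
  have hDpos : (Matrix.diagonal D).PosDef := by
    rw [← hconj]
    exact hΛ.mul_mul_conjTranspose_same (Matrix.vecMul_injective_of_isUnit
      (IsUnit.of_mul_eq_one _ hPP'))
  have hdiag : P * Mmat d Λ p * Pᵀ =
      Matrix.diagonal fun a => Mmat d (Matrix.diagonal D) p a a := by
    rw [← Mmat_conj hΛ hP, hconj]
    ext a b
    by_cases hab : a = b
    · simp [hab]
    · rw [Mmat_diagonal_apply_ne hDpos p hab, Matrix.diagonal_apply_ne _ hab]
  refine ⟨?_, _, hdiag⟩
  have hM : Mmat d Λ p =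
      Pᵀ * Matrix.diagonal (fun a => Mmat d (Matrix.diagonal D) p a a) * P := by
    rw [← hdiag]
    calc Mmat d Λ p = (Pᵀ * P) * Mmat d Λ p * (Pᵀ * P) := by simp [hPP]
      _ = _ := by simp only [Matrix.mul_assoc]
  have hmul : ∀ v w : Fin d → ℝ, (Pᵀ * Matrix.diagonal v * P) * (Pᵀ * Matrix.diagonal w * P) =
      Pᵀ * Matrix.diagonal (fun k => v k * w k) * P := fun v w => by
    calc _ = Pᵀ * Matrix.diagonal v * (P * Pᵀ) * Matrix.diagonal w * P := by
          simp only [Matrix.mul_assoc]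
      _ = _ := by
          rw [hPP', Matrix.mul_one, Matrix.mul_assoc Pᵀ, Matrix.diagonal_mul_diagonal]
  rw [hM, hD, hmul, hmul]
  simp only [mul_comm]
end
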